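/- Let f = x^b + B_{b−2}x^{b−2} + ⋯ + B_1x + B_0 ∈ S[x] with b ≥ 2 and B_i ∈ S for all i. Then the differential closure Diff(S[x][fW^b]) of the Rees algebra over S[x] generated by fW^b equals the smallest differentially closed Rees algebra over S[x] containing xW and B_iW^{b−i} for i = 0,…,b−2; equivalently, Diff(S[x][fW^b]) = S[x][xW] ⊙ Diff(S[x][B_{b−2}W^2, B_{b−3}W^3, …, B_0W^b]). -/

import Mathlib

open Polynomial
open scoped ENNReal

noncomputable section

namespace NashMult

/-- The `m`-adic order `ν(f)` of an element `f` of a ring: the largest `n` with `f ∈ m ^ n`. -/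
def adicOrder {R : Type*} [CommRing R] (m : Ideal R) (f : R) : ℕ :=
  sSup {n : ℕ | f ∈ m ^ n}

/-- A subalgebra `G ⊆ R[W]` is *graded* if it is spanned by its "monomials", i.e. it is closed
under taking homogeneous components.  This is the condition expressing that `G = ⊕ I_l W^l`
for a family of ideals `I_l` (with `I_0 = R` and `I_i · I_j ⊆ I_{i+j}` automatic). -/
def Graded {R : Type*} [CommRing R] (G : Subalgebra R (Polynomial R)) : Prop :=
  ∀ p ∈ G, ∀ n : ℕ, (C (p.coeff n) * X ^ n : Polynomial R) ∈ G

/-- A *Rees algebra* over `R`: a finitely generated graded subalgebra of `R[W]`. -/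
def IsReesAlgebra {R : Type*} [CommRing R] (G : Subalgebra R (Polynomial R)) : Prop :=
  G.FG ∧ Graded G

/-- The order of (the Rees algebra) `G` at the closed point of the local ring `(R, m)`:
`ord(G) = inf { ν(f)/n : f W^n a homogeneous element of G, n ≥ 1, f ≠ 0 }`
(with value `∞` for the empty infimum). -/
def reesOrder {R : Type*} [CommRing R] (m : Ideal R) (G : Subalgebra R (Polynomial R)) : ℝ≥0∞ :=
  sInf {q : ℝ≥0∞ | ∃ (f : R) (n : ℕ), f ≠ 0 ∧ 1 ≤ n ∧ (C f * X ^ n : Polynomial R) ∈ G ∧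
    q = (adicOrder m f : ℝ≥0∞) / (n : ℝ≥0∞)}

/-- `G = ⊕ I_l W^l` is *differentially closed* relative to a family `D` of derivations if
`I_{l+1} ⊆ I_l` and `D_j (I_l) ⊆ I_{l-1}` for all `l ≥ 1` and all `j`. -/
def DiffClosed {k R ι : Type*} [CommRing k] [CommRing R] [Algebra k R]
    (D : ι → Derivation k R R) (G : Subalgebra R (Polynomial R)) : Prop :=
  (∀ (f : R) (l : ℕ), 1 ≤ l → (C f * X ^ (l + 1) : Polynomial R) ∈ G →
      (C f * X ^ l : Polynomial R) ∈ G) ∧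
  (∀ (f : R) (l : ℕ) (j : ι), (C f * X ^ (l + 1) : Polynomial R) ∈ G →
      (C (D j f) * X ^ l : Polynomial R) ∈ G)

/-- `Diff(M)`: the smallest graded differentially closed subalgebra of `R[W]` containing the
set `M`. -/
def diffClosure {k R ι : Type*} [CommRing k] [CommRing R] [Algebra k R]
    (D : ι → Derivation k R R) (M : Set (Polynomial R)) : Subalgebra R (Polynomial R) :=
  sInf {G : Subalgebra R (Polynomial R) | M ⊆ ↑G ∧ Graded G ∧ DiffClosed D G}

/-- The image `ψ(G)` of a Rees algebra `G` over `R` under a homomorphism (arc) `ψ : R → K⟦t⟧`: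
the Rees algebra over `K⟦t⟧` generated by all `ψ(g) W^l` for `g W^l` a homogeneous element of
`G` with `ψ(g) ≠ 0`. -/
def arcImage {R A : Type*} [CommRing R] [CommRing A] (ψ : R → A)
    (G : Subalgebra R (Polynomial R)) : Subalgebra A (Polynomial A) :=
  Algebra.adjoin A {p : Polynomial A | ∃ (g : R) (l : ℕ),
    (C g * X ^ l : Polynomial R) ∈ G ∧ ψ g ≠ 0 ∧ p = C (ψ g) * X ^ l}

/-- The order `ord(ψ)` of an arc `ψ : R → K⟦t⟧`: the largest `n` such that
`ψ(m) ⊆ t^n` (`t` being the ideal `tI`). -/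
def homOrd {R A : Type*} [CommRing R] [CommRing A] (m : Ideal R) (tI : Ideal A)
    (ψ : R → A) : ℕ :=
  sSup {n : ℕ | ∀ s ∈ m, ψ s ∈ tI ^ n}

/-- The maximal ideal `(t)` of `K⟦t⟧`. -/
def tId (K : Type*) [CommRing K] : Ideal (PowerSeries K) :=
  Ideal.span {(PowerSeries.X : PowerSeries K)}

/-- The `t`-adic order on `K⟦t⟧`. -/
def tOrd {K : Type*} [CommRing K] (g : PowerSeries K) : ℕ :=
  adicOrder (tId K) g

/-- The family of ideals `I_l` of the graded algebra `G = ⊕ I_l W^l`. -/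
def idealFam {R : Type*} [CommRing R] (G : Subalgebra R (Polynomial R)) (l : ℕ) : Ideal R :=
  Submodule.comap (Polynomial.monomial l : R →ₗ[R] Polynomial R) (Subalgebra.toSubmodule G)

/-- The closed point of the local ring `(R, m)` belongs to the singular locus of
`G = ⊕ I_l W^l`, i.e. `ν(I_l) ≥ l` for all `l ≥ 1`. -/
def SingFam {R : Type*} [CommRing R] (m : Ideal R) (I : ℕ → Ideal R) : Prop :=
  ∀ l : ℕ, 1 ≤ l → I l ≤ m ^ l

/-- The transform `⊕ (I_l · T^{-l}) W^l` of a Rees algebra `⊕ I_l W^l` over a DVR with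
uniformizer `T` (when the closed point lies in the singular locus, `I_l ⊆ (T^l)` and
`I_l · T^{-l} = (I_l : (T^l))`). -/
def transformFam {R : Type*} [CommRing R] (T : R) (I : ℕ → Ideal R) : ℕ → Ideal R :=
  fun l => (I l).colon (Ideal.span {T ^ l})

/-- The persistance: the least number `κ` of transforms needed so that the closed point no
longer lies in the singular locus. -/
def persist {R : Type*} [CommRing R] (m : Ideal R) (T : R)
    (G : Subalgebra R (Polynomial R)) : ℕ :=
  sInf {κ : ℕ | ¬ SingFam m ((transformFam T)^[κ] (idealFam G))}

/-- The set of elements of a ring integral over a subset `s` (monic equation with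
coefficients in `s`). -/
def intClos {A : Type*} [CommRing A] (s : Set A) : Set A :=
  {p : A | ∃ q : Polynomial A, q.Monic ∧ (∀ n, q.coeff n ∈ s) ∧ Polynomial.eval p q = 0}


/-- The monic polynomial `f = x^b + B_{b-2} x^{b-2} + ⋯ + B_1 x + B_0` with coefficients
`B_j = Bc j` (only `j ≤ b - 2` is relevant). -/
def minPolyOf {S : Type*} [CommRing S] (b : ℕ) (Bc : ℕ → S) : Polynomial S :=
  Polynomial.X ^ b + ∑ j ∈ Finset.range (b - 1), Polynomial.C (Bc j) * Polynomial.X ^ j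


/-- The maximal ideal `(z_1, …, z_d)` of the polynomial ring `k[z_1, …, z_d]`
(the kernel of evaluation at the origin). -/
def mPoly (k : Type) [Field k] (d : ℕ) : Ideal (MvPolynomial (Fin d) k) :=
  RingHom.ker (MvPolynomial.aeval (fun _ => (0 : k)) : MvPolynomial (Fin d) k →ₐ[k] k)

instance {k : Type} [Field k] {d : ℕ} : (mPoly k d).IsMaximal :=
  RingHom.ker_isMaximal_of_surjective _ (fun a => ⟨MvPolynomial.C a, by simp⟩)

instance {k : Type} [Field k] {d : ℕ} : (mPoly k d).IsPrime :=
  (inferInstance : (mPoly k d).IsMaximal).isPrime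

/-- `IsSLoc k d S` says that `S` is (identified with) the localization of `k[z_1, …, z_d]`
at the maximal ideal `(z_1, …, z_d)`. -/
abbrev IsSLoc (k : Type) [Field k] (d : ℕ) (S : Type) [CommRing S]
    [Algebra (MvPolynomial (Fin d) k) S] : Prop :=
  IsLocalization.AtPrime S (mPoly k d)

/-- The element `z_j` of `S`. -/
def zvar (k : Type) [Field k] (d : ℕ) (S : Type) [CommRing S]
    [Algebra (MvPolynomial (Fin d) k) S] (j : Fin d) : S :=
  algebraMap (MvPolynomial (Fin d) k) S (MvPolynomial.X j)

/-- The maximal ideal `m = (z_1, …, z_d)` of the local ring `S`. -/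
def mS (k : Type) [Field k] (d : ℕ) (S : Type) [CommRing S]
    [Algebra (MvPolynomial (Fin d) k) S] : Ideal S :=
  (mPoly k d).map (algebraMap (MvPolynomial (Fin d) k) S)


/-!
Write `G = ⊕ I_l W^l` for a graded subalgebra closed under `∂/∂x`. If `b!` is invertible, the Hasse
derivative `∂_x^n / n!` maps `I_{l+n}` into `I_l` for `n ≤ b`. Applied to `f`, of degree `b` without
term of degree `b - 1`, the derivative of order `b - 1` is `b x`, so `f W^b ∈ G` forces `x W ∈ G`.
Once `x W ∈ G`, each coefficient is recovered by expanding at `x` and evaluating at `0 = x - x`: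
`p(0) = ∑ (∂_x^n p / n!) (-x)^n`, whose terms all lie in `I_l` for `p ∈ I_l` of degree at most `l`.
Hence a differentially closed algebra contains `f W^b` exactly when it contains `x W` and all the
`B_i W^(b-i)`.
-/

section Polynomial

theorem isUnit_factorial_of_le {S : Type*} [CommSemiring S] {m n : ℕ} (hmn : m ≤ n)
    (hn : IsUnit (n.factorial : S)) : IsUnit (m.factorial : S) :=
  isUnit_of_dvd_unit (Nat.cast_dvd_cast (Nat.factorial_dvd_factorial hmn)) hn

theorem hasseDeriv_map {S T : Type*} [Semiring S] [Semiring T] (φ : S →+* T) (n : ℕ)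
    (p : S[X]) : hasseDeriv n (p.map φ) = (hasseDeriv n p).map φ := by
  ext i
  simp only [hasseDeriv_coeff, coeff_map, map_mul, map_natCast]

theorem hasseDeriv_eq_of_natDegree_le_succ {S : Type*} [Semiring S] {p : S[X]} {n : ℕ}
    (hp : p.natDegree ≤ n + 1) :
    hasseDeriv n p = C ((n + 1 : ℕ) * p.coeff (n + 1)) * X + C (p.coeff n) := by
  have hdeg : (hasseDeriv n p).natDegree ≤ 1 :=
    (natDegree_hasseDeriv_le p n).trans (Nat.sub_le_iff_le_add'.mpr hp)
  rw [eq_X_add_C_of_natDegree_le_one hdeg]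
  simp only [hasseDeriv_coeff, zero_add, Nat.choose_self, Nat.cast_one, one_mul, add_comm 1 n,
    Nat.choose_succ_self_right]

variable {S : Type*} [CommRing S]

theorem sum_hasseDeriv_mul_neg_X_pow {p : S[X]} {m : ℕ} (hp : p.natDegree < m) :
    ∑ n ∈ Finset.range m, hasseDeriv n p * (-X) ^ n = C (p.coeff 0) := by
  have hdeg : (taylor X (p.map C)).natDegree < m :=
    (natDegree_taylor _ _).trans_lt (natDegree_map_le.trans_lt hp)
  calc ∑ n ∈ Finset.range m, hasseDeriv n p * (-X) ^ n
      = (taylor X (p.map C)).eval (-X) := by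
        simp only [eval_eq_sum_range' hdeg, taylor_coeff, hasseDeriv_map, eval_map, eval₂_C_X]
    _ = C (p.coeff 0) := by
        rw [taylor_eval, neg_add_cancel, ← coeff_zero_eq_eval_zero, coeff_map]

theorem derivation_apply_eq_derivative_smul {k M : Type*} [CommRing k] [Algebra k S[X]]
    [AddCommGroup M] [Module k M] [Module S[X] M] (D : Derivation k S[X] M)
    (hC : ∀ s : S, D (C s) = 0) (p : S[X]) : D p = derivative p • D X := by
  induction p using Polynomial.induction_on' with
  | add p q hp hq => rw [map_add, map_add, hp, hq, add_smul]
  | monomial n a =>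
    rw [← C_mul_X_pow_eq_monomial, D.leibniz, D.leibniz_pow, hC, smul_zero, add_zero,
      derivative_C_mul, derivative_X_pow, mul_smul, mul_smul, map_natCast, Nat.cast_smul_eq_nsmul]

theorem coeff_minPolyOf (b : ℕ) (Bc : ℕ → S) (n : ℕ) :
    (minPolyOf b Bc).coeff n = (if n = b then 1 else 0) + if n < b - 1 then Bc n else 0 := by
  simp only [minPolyOf, coeff_add, coeff_X_pow, finsetSum_coeff, coeff_C_mul_X_pow,
    Finset.sum_ite_eq, Finset.mem_range]

theorem natDegree_minPolyOf_le (b : ℕ) (Bc : ℕ → S) : (minPolyOf b Bc).natDegree ≤ b := by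
  refine natDegree_le_iff_coeff_eq_zero.mpr fun n hn => ?_
  rw [coeff_minPolyOf, if_neg hn.ne', if_neg (by omega), add_zero]

end Polynomial

section IdealFam

variable {R : Type*} [CommRing R] {G : Subalgebra R R[X]} {f g : R} {l m : ℕ}

theorem mem_idealFam : f ∈ idealFam G l ↔ C f * X ^ l ∈ G := by
  rw [C_mul_X_pow_eq_monomial]
  rfl

theorem idealFam_zero : idealFam G 0 = ⊤ :=
  Ideal.eq_top_iff_one _ |>.mpr <| mem_idealFam.mpr <| by
    rw [C_1, one_mul, pow_zero]
    exact G.one_mem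

theorem mul_mem_idealFam (hf : f ∈ idealFam G l) (hg : g ∈ idealFam G m) :
    f * g ∈ idealFam G (l + m) := by
  rw [mem_idealFam] at hf hg ⊢
  rw [C_mul, pow_add, mul_mul_mul_comm]
  exact G.mul_mem hf hg

theorem pow_mem_idealFam (hf : f ∈ idealFam G 1) (n : ℕ) : f ^ n ∈ idealFam G n := by
  rw [mem_idealFam, pow_one] at hf
  rw [mem_idealFam, C_pow, ← mul_pow]
  exact G.pow_mem hf n

end IdealFam

section DerivativeClosed

/-- The condition `∂(I_{l+1})/∂x ⊆ I_l` on the family `I_l` of a subalgebra `G` of `S[x][W]`: the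
part of differential closedness that concerns `∂/∂x`, with `Polynomial.derivative` as `∂/∂x`. -/
def DerivativeClosed {S : Type*} [CommRing S] (G : Subalgebra S[X] S[X][X]) : Prop :=
  ∀ l, ∀ f ∈ idealFam G (l + 1), derivative f ∈ idealFam G l

variable {S : Type*} [CommRing S] {G : Subalgebra S[X] S[X][X]} {p : S[X]}

theorem mem_idealFam_of_C_coeff_mem {b : ℕ} (hX : X ∈ idealFam G 1) (hdeg : p.natDegree ≤ b)
    (hcoeff : ∀ i ≤ b, C (p.coeff i) ∈ idealFam G (b - i)) : p ∈ idealFam G b := by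
  rw [p.as_sum_range_C_mul_X_pow' (Nat.lt_succ_of_le hdeg)]
  refine Ideal.sum_mem _ fun i hi => ?_
  have hib : i ≤ b := Finset.mem_range_succ_iff.mp hi
  simpa only [Nat.sub_add_cancel hib] using
    mul_mem_idealFam (hcoeff i hib) (pow_mem_idealFam hX i)

theorem iterate_derivative_mem_idealFam {l : ℕ} (hG : DerivativeClosed G) (n : ℕ)
    (hp : p ∈ idealFam G (l + n)) : derivative^[n] p ∈ idealFam G l := by
  induction n generalizing p with
  | zero => exact hp
  | succ n ih => exact ih (hG _ p hp)

theorem hasseDeriv_mem_idealFam {l n : ℕ} (hG : DerivativeClosed G)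
    (hn : IsUnit (n.factorial : S)) (hp : p ∈ idealFam G (l + n)) :
    hasseDeriv n p ∈ idealFam G l := by
  have hunit : IsUnit (n.factorial : S[X]) := by
    simpa only [map_natCast] using hn.map C
  rw [← Ideal.unit_mul_mem_iff_mem _ hunit, ← nsmul_eq_mul, ← LinearMap.smul_apply,
    factorial_smul_hasseDeriv]
  exact iterate_derivative_mem_idealFam hG n hp

theorem C_coeff_zero_mem_idealFam {b : ℕ} (hG : DerivativeClosed G)
    (hb : IsUnit (b.factorial : S)) (hX : X ∈ idealFam G 1) (hdeg : p.natDegree ≤ b)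
    (hp : p ∈ idealFam G b) : C (p.coeff 0) ∈ idealFam G b := by
  rw [← sum_hasseDeriv_mul_neg_X_pow (Nat.lt_succ_of_le hdeg)]
  refine Ideal.sum_mem _ fun n hn => ?_
  obtain ⟨l, rfl⟩ := Nat.exists_eq_add_of_le' (Finset.mem_range_succ_iff.mp hn)
  exact mul_mem_idealFam
    (hasseDeriv_mem_idealFam hG (isUnit_factorial_of_le le_add_self hb) hp)
    (pow_mem_idealFam (neg_mem hX) n)

theorem C_coeff_mem_idealFam {b i : ℕ} (hG : DerivativeClosed G)
    (hb : IsUnit (b.factorial : S)) (hX : X ∈ idealFam G 1) (hdeg : p.natDegree ≤ b)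
    (hp : p ∈ idealFam G b) (hi : i ≤ b) : C (p.coeff i) ∈ idealFam G (b - i) := by
  have hderiv : hasseDeriv i p ∈ idealFam G (b - i) :=
    hasseDeriv_mem_idealFam hG (isUnit_factorial_of_le hi hb) (by rwa [Nat.sub_add_cancel hi])
  have hcoeff : (hasseDeriv i p).coeff 0 = p.coeff i := by
    rw [hasseDeriv_coeff, zero_add, Nat.choose_self, Nat.cast_one, one_mul]
  rw [← hcoeff]
  exact C_coeff_zero_mem_idealFam hG (isUnit_factorial_of_le (Nat.sub_le b i) hb) hX
    ((natDegree_hasseDeriv_le p i).trans (Nat.sub_le_sub_right hdeg i)) hderiv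

theorem X_mem_idealFam_one_of_coeff_eq_zero {n : ℕ} (hG : DerivativeClosed G)
    (hn : IsUnit ((n + 1).factorial : S)) (hdeg : p.natDegree ≤ n + 1)
    (hlead : IsUnit (p.coeff (n + 1))) (hnext : p.coeff n = 0) (hp : p ∈ idealFam G (n + 1)) :
    X ∈ idealFam G 1 := by
  have hderiv : hasseDeriv n p ∈ idealFam G 1 :=
    hasseDeriv_mem_idealFam hG (isUnit_factorial_of_le n.le_succ hn) (by rwa [add_comm])
  have hunit : IsUnit ((n + 1 : ℕ) : S) :=
    isUnit_of_dvd_unit (Nat.cast_dvd_cast (Nat.dvd_factorial n.succ_pos le_rfl)) hn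
  rwa [hasseDeriv_eq_of_natDegree_le_succ hdeg, hnext, C_0, add_zero,
    Ideal.unit_mul_mem_iff_mem _ ((hunit.mul hlead).map C)] at hderiv

theorem minPolyOf_mem_idealFam_iff {b : ℕ} (hG : DerivativeClosed G) (hb : 2 ≤ b)
    (hfact : IsUnit (b.factorial : S)) (Bc : ℕ → S) :
    minPolyOf b Bc ∈ idealFam G b ↔
      X ∈ idealFam G 1 ∧ ∀ i ≤ b - 2, C (Bc i) ∈ idealFam G (b - i) := by
  obtain ⟨n, rfl⟩ : ∃ n, b = n + 2 := Nat.exists_eq_add_of_le' hb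
  have hdeg := natDegree_minPolyOf_le (n + 2) Bc
  have htop : (minPolyOf (n + 2) Bc).coeff (n + 2) = 1 := by simp [coeff_minPolyOf]
  have hnext : (minPolyOf (n + 2) Bc).coeff (n + 1) = 0 := by simp [coeff_minPolyOf]
  have hlow : ∀ i ≤ n, (minPolyOf (n + 2) Bc).coeff i = Bc i := fun i hi => by
    rw [coeff_minPolyOf, if_neg (by omega), if_pos (by omega), zero_add]
  constructor
  · intro hf
    have hX : X ∈ idealFam G 1 :=
      X_mem_idealFam_one_of_coeff_eq_zero hG hfact hdeg (htop ▸ isUnit_one) hnext hf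
    refine ⟨hX, fun i hi => ?_⟩
    rw [← hlow i hi]
    exact C_coeff_mem_idealFam hG hfact hX hdeg hf (hi.trans le_self_add)
  · rintro ⟨hX, hB⟩
    refine mem_idealFam_of_C_coeff_mem hX hdeg fun i hi => ?_
    obtain hi | rfl | rfl : i ≤ n ∨ i = n + 1 ∨ i = n + 2 := by omega
    · exact hlow i hi ▸ hB i hi
    · rw [hnext, C_0]
      exact zero_mem _
    · rw [Nat.sub_self, idealFam_zero]
      exact Submodule.mem_top

end DerivativeClosed

section DiffClosure

variable {k ι : Type*} [CommRing k]

theorem DiffClosed.derivativeClosed {S : Type*} [CommRing S] [Algebra k S[X]]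
    {D : ι → Derivation k S[X] S[X]} {G : Subalgebra S[X] S[X][X]} (hG : DiffClosed D G) (j : ι)
    (hDC : ∀ s : S, D j (C s) = 0) (hDX : D j X = 1) : DerivativeClosed G := fun l f hf => by
  have hDf : D j f = derivative f := by
    rw [derivation_apply_eq_derivative_smul (D j) hDC, hDX, smul_eq_mul, mul_one]
  exact hDf ▸ mem_idealFam.mpr (hG.2 f l j (mem_idealFam.mp hf))

theorem diffClosure_congr {R : Type*} [CommRing R] [Algebra k R] {D : ι → Derivation k R R}
    {M N : Set R[X]} (h : ∀ G : Subalgebra R R[X], DiffClosed D G → (M ⊆ G ↔ N ⊆ G)) :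
    diffClosure D M = diffClosure D N :=
  congrArg sInf <| Set.ext fun G => and_congr_left fun hG => h G hG.2

end DiffClosure

theorem diff_closure_of_hypersurface_eq_general {k S ι : Type*} [CommRing k] [CommRing S]
    [Algebra k S[X]] (D : ι → Derivation k S[X] S[X]) (j : ι) (hDC : ∀ s : S, D j (C s) = 0)
    (hDX : D j X = 1) {b : ℕ} (hb : 2 ≤ b) (hfact : IsUnit (b.factorial : S)) (Bc : ℕ → S) :
    diffClosure D {C (minPolyOf b Bc) * X ^ b} =
      diffClosure D (insert (C X * X) {p | ∃ i ≤ b - 2, p = C (C (Bc i)) * X ^ (b - i)}) := by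
  refine diffClosure_congr fun G hG => ?_
  have hX : C X * X ∈ G ↔ X ∈ idealFam G 1 := by rw [mem_idealFam, pow_one]
  have hgen : {p | ∃ i ≤ b - 2, p = C (C (Bc i)) * X ^ (b - i)} ⊆ (G : Set S[X][X]) ↔
      ∀ i ≤ b - 2, C (Bc i) ∈ idealFam G (b - i) :=
    ⟨fun h i hi => mem_idealFam.mpr (h ⟨i, hi, rfl⟩),
      fun h _ ⟨i, hi, hp⟩ => hp ▸ mem_idealFam.mp (h i hi)⟩
  rw [Set.singleton_subset_iff, Set.insert_subset_iff, hgen, SetLike.mem_coe, SetLike.mem_coe,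
    ← mem_idealFam, hX]
  exact minPolyOf_mem_idealFam_iff (hG.derivativeClosed j hDC hDX) hb hfact Bc

/-- (Lemma `lema:generadores_algebra`.)  For `f = x^b + B_{b-2} x^{b-2} + ⋯ + B_0 ∈ S[x]`,
the differential closure `Diff(S[x][f W^b])` equals the smallest differentially closed Rees
algebra over `S[x]` containing `x W` and the elements `B_i W^{b-i}`, `i = 0, …, b-2`
(equivalently, `Diff(S[x][f W^b]) = S[x][x W] ⊙ Diff(S[x][B_{b-2} W^2, …, B_0 W^b])`).
Here the differential structure on `S[x]` is given by `∂/∂x` (the derivation `Dx`) together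
with the extensions `Dz j` of the `∂/∂z_j` (the derivations `DS j` of `S`). -/
theorem diff_closure_of_hypersurface_eq
    (k : Type) [Field k] [CharZero k] (d : ℕ) (hd : 1 ≤ d)
    (S : Type) [CommRing S] [IsDomain S] [Algebra (MvPolynomial (Fin d) k) S]
    [Algebra k S] [IsScalarTower k (MvPolynomial (Fin d) k) S] [IsSLoc k d S]
    (DS : Fin d → Derivation k S S)
    (hDS : ∀ i j : Fin d, DS j (zvar k d S i) = if i = j then 1 else 0)
    (Dz : Fin d → Derivation k (Polynomial S) (Polynomial S))
    (hDzC : ∀ (j : Fin d) (s : S), Dz j (Polynomial.C s) = Polynomial.C (DS j s))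
    (hDzX : ∀ j : Fin d, Dz j (Polynomial.X : Polynomial S) = 0)
    (Dx : Derivation k (Polynomial S) (Polynomial S))
    (hDxC : ∀ s : S, Dx (Polynomial.C s) = 0)
    (hDxX : Dx (Polynomial.X : Polynomial S) = 1)
    (b : ℕ) (hb : 2 ≤ b) (Bc : ℕ → S) :
    diffClosure (fun o : Option (Fin d) => o.elim Dx Dz)
        {(Polynomial.C (minPolyOf b Bc) * Polynomial.X ^ b :
          Polynomial (Polynomial S))} =
      diffClosure (fun o : Option (Fin d) => o.elim Dx Dz)
        (insert (Polynomial.C (Polynomial.X : Polynomial S) * Polynomial.X)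
          {p : Polynomial (Polynomial S) | ∃ i ≤ b - 2,
            p = Polynomial.C (Polynomial.C (Bc i)) * Polynomial.X ^ (b - i)}) := by
  have hfact : IsUnit (b.factorial : S) := by
    simpa only [map_natCast] using
      (IsUnit.mk0 (b.factorial : k) (mod_cast b.factorial_ne_zero)).map (algebraMap k S)
  exact diff_closure_of_hypersurface_eq_general _ none hDxC hDxX hb hfact Bc

end NashMult
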